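/- The function V(z, φ) := (1/2πi)·Σ_{n>0} (e^{inφ}/n²)·K₀(2πn|z|) of z ∈ ℂˣ and φ ∈ ℝ, where K₀ is the modified Bessel function of the second kind, satisfies the linear PDE ∂²V/∂Z∂Z̄ + π²·∂²V/∂φ² = 0 (with Z = z treated as holomorphic coordinate), as a consequence of the Bessel identities K₀'(x) = −K₁(x) and (xK₁(x))' = −xK₀(x). -/

import Mathlib

/- Verification of the second Plebański-like linear PDE (4.20) for
V(z,φ) = (1/2πi)Σ_{n>0} (e^{inφ}/n²)K₀(2πn|z|), viewed as a function of
(x, y, φ) ∈ ℝ³ with z = x + iy: ∂²V/∂Z∂Z̄ + π²∂²V/∂φ² = 0 for z ≠ 0,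
as a consequence of K₀' = −K₁ and (xK₁)' = −xK₀. -/

/-- Modified Bessel function K₀ (integral representation). -/
noncomputable def K0 (x : ℝ) : ℝ :=
  ∫ t in Set.Ioi (0 : ℝ), Real.exp (-x * Real.cosh t)

/-- Modified Bessel function K₁ (integral representation). -/
noncomputable def K1 (x : ℝ) : ℝ :=
  ∫ t in Set.Ioi (0 : ℝ), Real.exp (-x * Real.cosh t) * Real.cosh t

/-- Partial derivative in the i-th coordinate of ℝ³. -/
noncomputable def pd3 (i : Fin 3) (f : (Fin 3 → ℝ) → ℂ) (p : Fin 3 → ℝ) : ℂ :=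
  fderiv ℝ f p (Pi.single i 1)

/-- Wirtinger derivative ∂/∂Z = ½(∂/∂x − i∂/∂y). -/
noncomputable def wZ (f : (Fin 3 → ℝ) → ℂ) (p : Fin 3 → ℝ) : ℂ :=
  (1 / 2 : ℂ) * (pd3 0 f p - Complex.I * pd3 1 f p)

/-- Wirtinger derivative ∂/∂Z̄ = ½(∂/∂x + i∂/∂y). -/
noncomputable def wZb (f : (Fin 3 → ℝ) → ℂ) (p : Fin 3 → ℝ) : ℂ :=
  (1 / 2 : ℂ) * (pd3 0 f p + Complex.I * pd3 1 f p)

/-- V(z,φ) = (1/2πi)Σ_{n>0} (e^{inφ}/n²)K₀(2πn|z|), z = p₀ + i·p₁, φ = p₂. -/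
noncomputable def Vfun (p : Fin 3 → ℝ) : ℂ :=
  (1 / (2 * (Real.pi : ℂ) * Complex.I)) *
    ∑' n : ℕ, Complex.exp (Complex.I * ((n : ℂ) + 1) * ((p 2 : ℝ) : ℂ))
        / ((n : ℂ) + 1) ^ 2 *
      ((K0 (2 * Real.pi * ((n : ℝ) + 1) * Real.sqrt ((p 0) ^ 2 + (p 1) ^ 2)) : ℝ) : ℂ)

/-- Exponential decay, uniform on every half-line `[ε, ∞)` with `ε > 0`. -/
def ExpDecay (h : ℝ → ℝ) : Prop :=
  ∀ ε : ℝ, 0 < ε → ∃ C : ℝ, ∀ x : ℝ, ε ≤ x → |h x| ≤ C * Real.exp (-x / 2)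

theorem ExpDecay.neg {h : ℝ → ℝ} (hh : ExpDecay h) : ExpDecay (fun x => -h x) := by
  intro ε hε
  obtain ⟨C, hC⟩ := hh ε hε
  exact ⟨C, fun x hx => by simpa using hC x hx⟩

theorem exp_neg_mul_cosh_mul_cosh_le {ε x t : ℝ} (hε : 0 < ε) (hx : ε ≤ x) (ht : 0 < t) :
    Real.exp (-x * Real.cosh t) * Real.cosh t
      ≤ 8 / ε ^ 2 * Real.exp ε * Real.exp (-x) * Real.exp (-t) := by
  have hc1 : 1 ≤ Real.cosh t := Real.one_le_cosh t
  have hw : 0 < Real.exp t := Real.exp_pos t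
  have hcw : Real.cosh t ≤ Real.exp t := by
    rw [Real.cosh_eq]
    have : Real.exp (-t) ≤ Real.exp t := Real.exp_le_exp.2 (by linarith)
    linarith
  have hwc : Real.exp t / 2 ≤ Real.cosh t := by
    rw [Real.cosh_eq]
    have := Real.exp_pos (-t)
    linarith
  have h1 : Real.exp (-x * Real.cosh t)
      ≤ Real.exp ε * Real.exp (-x) * Real.exp (-(ε * Real.exp t / 2)) := by
    rw [← Real.exp_add, ← Real.exp_add, Real.exp_le_exp]
    nlinarith [mul_nonneg (sub_nonneg.2 hx) (sub_nonneg.2 hc1),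
      mul_le_mul_of_nonneg_left hwc hε.le]
  have h2 : Real.exp (-(ε * Real.exp t / 2)) ≤ 8 / (ε ^ 2 * Real.exp t ^ 2) := by
    rw [Real.exp_neg, inv_le_comm₀ (Real.exp_pos _) (by positivity), inv_div]
    have hs : 0 ≤ ε * Real.exp t / 2 := by positivity
    have := Real.quadratic_le_exp_of_nonneg hs
    nlinarith
  calc Real.exp (-x * Real.cosh t) * Real.cosh t
      ≤ (Real.exp ε * Real.exp (-x) * (8 / (ε ^ 2 * Real.exp t ^ 2))) * Real.exp t := by
        refine mul_le_mul (h1.trans ?_) hcw (by linarith) (by positivity)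
        gcongr
    _ = 8 / ε ^ 2 * Real.exp ε * Real.exp (-x) * Real.exp (-t) := by
        rw [Real.exp_neg t]
        field_simp

theorem abs_setIntegral_le_of_le_exp_neg {f : ℝ → ℝ} {D : ℝ}
    (hf : ∀ t : ℝ, 0 < t → |f t| ≤ D * Real.exp (-t)) :
    |∫ t in Set.Ioi (0 : ℝ), f t| ≤ D := by
  have hg : MeasureTheory.IntegrableOn (fun t : ℝ => D * Real.exp (-t)) (Set.Ioi 0) := by
    simpa [MeasureTheory.IntegrableOn] using (exp_neg_integrableOn_Ioi 0 one_pos).const_mul D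
  rw [← Real.norm_eq_abs]
  refine (MeasureTheory.norm_integral_le_of_norm_le hg ?_).trans_eq ?_
  · exact (MeasureTheory.ae_restrict_mem measurableSet_Ioi).mono fun t ht => hf t ht
  · rw [MeasureTheory.integral_const_mul, integral_exp_neg_Ioi_zero, mul_one]

theorem abs_K1_le {ε x : ℝ} (hε : 0 < ε) (hx : ε ≤ x) :
    |K1 x| ≤ 8 / ε ^ 2 * Real.exp ε * Real.exp (-x) := by
  refine abs_setIntegral_le_of_le_exp_neg fun t ht => ?_
  rw [abs_of_nonneg (mul_nonneg (Real.exp_pos _).le (Real.cosh_pos t).le)]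
  exact exp_neg_mul_cosh_mul_cosh_le hε hx ht

theorem abs_K0_le {ε x : ℝ} (hε : 0 < ε) (hx : ε ≤ x) :
    |K0 x| ≤ 8 / ε ^ 2 * Real.exp ε * Real.exp (-x) := by
  refine abs_setIntegral_le_of_le_exp_neg fun t ht => ?_
  rw [abs_of_pos (Real.exp_pos _)]
  exact (le_mul_of_one_le_right (Real.exp_pos _).le (Real.one_le_cosh t)).trans
    (exp_neg_mul_cosh_mul_cosh_le hε hx ht)

theorem ExpDecay.of_exp_neg {h : ℝ → ℝ}
    (hh : ∀ ε : ℝ, 0 < ε → ∃ C : ℝ, 0 ≤ C ∧ ∀ x : ℝ, ε ≤ x → |h x| ≤ C * Real.exp (-x)) :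
    ExpDecay h ∧ ExpDecay (fun x => x * h x) := by
  constructor <;> intro ε hε <;> obtain ⟨C, hC0, hC⟩ := hh ε hε
  · refine ⟨C, fun x hx => (hC x hx).trans ?_⟩
    gcongr
    linarith
  · refine ⟨2 * C, fun x hx => ?_⟩
    have hx0 : 0 < x := hε.trans_le hx
    have h1 : x ≤ 2 * Real.exp (x / 2) := by linarith [Real.add_one_le_exp (x / 2)]
    rw [abs_mul, abs_of_pos hx0]
    calc x * |h x| ≤ (2 * Real.exp (x / 2)) * (C * Real.exp (-x)) :=
          mul_le_mul h1 (hC x hx) (abs_nonneg _) (by positivity)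
      _ = 2 * C * (Real.exp (x / 2) * Real.exp (-x)) := by ring
      _ = 2 * C * Real.exp (-x / 2) := by rw [← Real.exp_add]; congr 2; ring

theorem expDecay_K0 : ExpDecay K0 ∧ ExpDecay (fun x => x * K0 x) :=
  ExpDecay.of_exp_neg fun ε hε => ⟨8 / ε ^ 2 * Real.exp ε, by positivity, fun _ hx => abs_K0_le hε hx⟩

theorem expDecay_K1 : ExpDecay K1 ∧ ExpDecay (fun x => x * K1 x) :=
  ExpDecay.of_exp_neg fun ε hε => ⟨8 / ε ^ 2 * Real.exp ε, by positivity, fun _ hx => abs_K1_le hε hx⟩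

/-- The series `∑ cₙ e^{i(n+1)φ} h(2π(n+1)r)` as a function of `(r, φ)`. -/
noncomputable def polarSeries (c : ℕ → ℂ) (h : ℝ → ℝ) (q : ℝ × ℝ) : ℂ :=
  ∑' n : ℕ, c n * Complex.exp (Complex.I * ((n : ℂ) + 1) * (q.2 : ℂ))
    * (h (2 * Real.pi * ((n : ℝ) + 1) * q.1) : ℂ)

theorem norm_exp_I_mul_nat_mul (n : ℕ) (φ : ℝ) :
    ‖Complex.exp (Complex.I * ((n : ℂ) + 1) * (φ : ℂ))‖ = 1 := by
  rw [Complex.norm_exp]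
  simp

theorem summable_succ_mul_exp {a : ℝ} (ha : 0 < a) :
    Summable fun n : ℕ => ((n : ℝ) + 1) * Real.exp (-(a * ((n : ℝ) + 1))) := by
  have := (summable_nat_add_iff 1).2 (Real.summable_pow_mul_exp_neg_nat_mul 1 ha)
  simpa using this

theorem norm_polarSeries_term_le {c : ℕ → ℂ} {h : ℝ → ℝ} {C ε r φ : ℝ} (hε : 0 < ε)
    (hr : ε ≤ r) (hC : ∀ x : ℝ, ε ≤ x → |h x| ≤ C * Real.exp (-x / 2)) {K : ℝ} (n : ℕ)
    (hc : ‖c n‖ ≤ K * ((n : ℝ) + 1)) :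
    ‖c n * Complex.exp (Complex.I * ((n : ℂ) + 1) * (φ : ℂ))
      * (h (2 * Real.pi * ((n : ℝ) + 1) * r) : ℂ)‖
      ≤ K * C * (((n : ℝ) + 1) * Real.exp (-(Real.pi * ε * ((n : ℝ) + 1)))) := by
  have hn : (1 : ℝ) ≤ (n : ℝ) + 1 := by linarith [n.cast_nonneg (α := ℝ)]
  have hπ := Real.pi_gt_three
  have hx : ε ≤ 2 * Real.pi * ((n : ℝ) + 1) * r := by
    have : 1 ≤ 2 * Real.pi * ((n : ℝ) + 1) := by nlinarith
    nlinarith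
  have hC0 : 0 ≤ C := by
    have := (abs_nonneg _).trans (hC ε le_rfl)
    exact nonneg_of_mul_nonneg_left this (Real.exp_pos _)
  rw [norm_mul, norm_mul, norm_exp_I_mul_nat_mul, mul_one, Complex.norm_real, Real.norm_eq_abs]
  calc ‖c n‖ * |h (2 * Real.pi * ((n : ℝ) + 1) * r)|
      ≤ (K * ((n : ℝ) + 1)) * (C * Real.exp (-(2 * Real.pi * ((n : ℝ) + 1) * r) / 2)) :=
        mul_le_mul hc (hC _ hx) (abs_nonneg _) ((norm_nonneg _).trans hc)
    _ ≤ (K * ((n : ℝ) + 1)) * (C * Real.exp (-(Real.pi * ε * ((n : ℝ) + 1)))) := by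
        refine mul_le_mul_of_nonneg_left ?_ ((norm_nonneg _).trans hc)
        refine mul_le_mul_of_nonneg_left (Real.exp_le_exp.2 ?_) hC0
        nlinarith [mul_le_mul_of_nonneg_left hr (show 0 ≤ Real.pi * ((n : ℝ) + 1) by positivity)]
    _ = _ := by ring

theorem hasFDerivAt_polarSeries {c : ℕ → ℂ} {h h' : ℝ → ℝ} (hc : ∀ n, ‖c n‖ ≤ 1)
    (hd : ∀ x : ℝ, 0 < x → HasDerivAt h (h' x) x) (hh : ExpDecay h) (hh' : ExpDecay h')
    {q : ℝ × ℝ} (hq : 0 < q.1) :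
    HasFDerivAt (polarSeries c h)
      ((ContinuousLinearMap.fst ℝ ℝ ℝ).smulRight
          (polarSeries (fun n => c n * (2 * Real.pi * ((n : ℂ) + 1))) h' q)
        + (ContinuousLinearMap.snd ℝ ℝ ℝ).smulRight
          (polarSeries (fun n => c n * (Complex.I * ((n : ℂ) + 1))) h q)) q := by
  obtain ⟨ε, hε, hεq⟩ := exists_between hq
  obtain ⟨C, hC⟩ := hh ε hε
  obtain ⟨C', hC'⟩ := hh' ε hε
  have hsum := summable_succ_mul_exp (mul_pos Real.pi_pos hε)
  have hnorm : ∀ n : ℕ, ‖(n : ℂ) + 1‖ = (n : ℝ) + 1 := fun n => by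
    exact_mod_cast Complex.norm_natCast (n + 1)
  have hc0 : ∀ n : ℕ, ‖c n‖ ≤ 1 * ((n : ℝ) + 1) := fun n =>
    (hc n).trans (by linarith [n.cast_nonneg (α := ℝ)])
  have hc1 : ∀ n : ℕ, ‖c n * (2 * Real.pi * ((n : ℂ) + 1))‖ ≤ (2 * Real.pi) * ((n : ℝ) + 1) := by
    intro n
    rw [norm_mul, norm_mul, hnorm]
    have : ‖(2 * Real.pi : ℂ)‖ = 2 * Real.pi := by simp [Real.pi_pos.le]
    rw [this]
    exact mul_le_of_le_one_left (by positivity) (hc n)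
  have hc2 : ∀ n : ℕ, ‖c n * (Complex.I * ((n : ℂ) + 1))‖ ≤ 1 * ((n : ℝ) + 1) := by
    intro n
    rw [norm_mul, norm_mul, hnorm, Complex.norm_I]
    exact mul_le_of_le_one_left (by positivity) (hc n)
  let A : ℕ → ℝ × ℝ → ℂ := fun n q => c n * (2 * Real.pi * ((n : ℂ) + 1))
    * Complex.exp (Complex.I * ((n : ℂ) + 1) * (q.2 : ℂ))
    * (h' (2 * Real.pi * ((n : ℝ) + 1) * q.1) : ℂ)
  let B : ℕ → ℝ × ℝ → ℂ := fun n q => c n * (Complex.I * ((n : ℂ) + 1))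
    * Complex.exp (Complex.I * ((n : ℂ) + 1) * (q.2 : ℂ))
    * (h (2 * Real.pi * ((n : ℝ) + 1) * q.1) : ℂ)
  have hA : ∀ n (q : ℝ × ℝ), ε < q.1 → ‖A n q‖ ≤ 2 * Real.pi * C' * _ := fun n q hq =>
    norm_polarSeries_term_le (c := fun n => c n * (2 * Real.pi * ((n : ℂ) + 1)))
      hε hq.le hC' n (hc1 n)
  have hB : ∀ n (q : ℝ × ℝ), ε < q.1 → ‖B n q‖ ≤ 1 * C * _ := fun n q hq =>
    norm_polarSeries_term_le (c := fun n => c n * (Complex.I * ((n : ℂ) + 1)))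
      hε hq.le hC n (hc2 n)
  have hAs : Summable fun n => A n q := .of_norm_bounded (hsum.mul_left _) fun n => hA n q hεq
  have hBs : Summable fun n => B n q := .of_norm_bounded (hsum.mul_left _) fun n => hB n q hεq
  have key := hasFDerivAt_tsum_of_isPreconnected (𝕜 := ℝ) (x₀ := q) (x := q)
    (s := Prod.fst ⁻¹' Set.Ioi ε)
    (f := fun n q => c n * Complex.exp (Complex.I * ((n : ℂ) + 1) * ((q : ℝ × ℝ).2 : ℂ))
      * (h (2 * Real.pi * ((n : ℝ) + 1) * q.1) : ℂ))
    (f' := fun n q => (ContinuousLinearMap.fst ℝ ℝ ℝ).smulRight (A n q)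
      + (ContinuousLinearMap.snd ℝ ℝ ℝ).smulRight (B n q))
    ((hsum.mul_left (2 * Real.pi * C')).add (hsum.mul_left (1 * C)))
    (isOpen_Ioi.preimage continuous_fst)
    ((convex_Ioi ε).linear_preimage (LinearMap.fst ℝ ℝ ℝ)).isPreconnected
    ?_ ?_ hεq (.of_norm_bounded (hsum.mul_left _) fun n =>
      norm_polarSeries_term_le hε hεq.le hC n (hc0 n)) hεq
  · refine key.congr_fderiv ?_
    have hA' := (hAs.hasSum.mapL (ContinuousLinearMap.smulRightL ℝ (ℝ × ℝ) ℂ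
      (ContinuousLinearMap.fst ℝ ℝ ℝ)))
    have hB' := (hBs.hasSum.mapL (ContinuousLinearMap.smulRightL ℝ (ℝ × ℝ) ℂ
      (ContinuousLinearMap.snd ℝ ℝ ℝ)))
    exact (hA'.add hB').tsum_eq
  · intro n q hq
    have hr : HasFDerivAt (fun q : ℝ × ℝ => 2 * Real.pi * ((n : ℝ) + 1) * q.1)
        ((2 * Real.pi * ((n : ℝ) + 1)) • ContinuousLinearMap.fst ℝ ℝ ℝ) q :=
      hasFDerivAt_fst.const_mul _
    have hpos : 0 < 2 * Real.pi * ((n : ℝ) + 1) * q.1 := by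
      have : 0 < q.1 := hε.trans hq
      positivity
    have h1 := Complex.ofRealCLM.hasFDerivAt.comp q ((hd _ hpos).hasFDerivAt.comp q hr)
    have h2 := ((Complex.ofRealCLM.hasFDerivAt.comp q
      (hasFDerivAt_snd (𝕜 := ℝ) (p := q))).const_mul
      (Complex.I * ((n : ℂ) + 1))).cexp.const_mul (c n)
    refine (h2.mul h1).congr_fderiv ?_
    ext <;> simp [A, B] <;> ring
  · intro n q hq
    refine (norm_add_le _ _).trans (add_le_add ?_ ?_)
    · rw [ContinuousLinearMap.norm_smulRight_apply]
      exact (mul_le_of_le_one_left (norm_nonneg _) (ContinuousLinearMap.norm_fst_le ..)).trans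
        (hA n q hq)
    · rw [ContinuousLinearMap.norm_smulRight_apply]
      exact (mul_le_of_le_one_left (norm_nonneg _) (ContinuousLinearMap.norm_snd_le ..)).trans
        (hB n q hq)

theorem polarSeries_eq_mul {c d : ℕ → ℂ} {g h : ℝ → ℝ} {k : ℂ} {q : ℝ × ℝ}
    (hcd : ∀ n : ℕ, c n * (g (2 * Real.pi * ((n : ℝ) + 1) * q.1) : ℂ)
      = k * (d n * (h (2 * Real.pi * ((n : ℝ) + 1) * q.1) : ℂ))) :
    polarSeries c g q = k * polarSeries d h q := by
  unfold polarSeries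
  rw [← tsum_mul_left]
  exact tsum_congr fun n => by
    linear_combination Complex.exp (Complex.I * ((n : ℂ) + 1) * (q.2 : ℂ)) * hcd n

/-- The cylindrical coordinates `(r, φ)` of `(x, y, φ)`, where `r = √(x² + y²)`. -/
noncomputable def polar (p : Fin 3 → ℝ) : ℝ × ℝ := (Real.sqrt (p 0 ^ 2 + p 1 ^ 2), p 2)

theorem polar_fst_pos {p : Fin 3 → ℝ} (hp : ¬(p 0 = 0 ∧ p 1 = 0)) : 0 < (polar p).1 := by
  refine Real.sqrt_pos.2 (lt_of_le_of_ne (by positivity) fun h => hp ?_)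
  constructor <;> nlinarith [sq_nonneg (p 0), sq_nonneg (p 1)]

theorem polar_fst_sq (p : Fin 3 → ℝ) : (polar p).1 ^ 2 = p 0 ^ 2 + p 1 ^ 2 :=
  Real.sq_sqrt (by positivity)

theorem continuous_polar : Continuous polar := by
  unfold polar
  fun_prop

theorem hasFDerivAt_polar {p : Fin 3 → ℝ} (hp : 0 < (polar p).1) :
    HasFDerivAt polar
      (((p 0 / (polar p).1) • ContinuousLinearMap.proj (R := ℝ) (φ := fun _ : Fin 3 => ℝ) 0
        + (p 1 / (polar p).1) • ContinuousLinearMap.proj (R := ℝ) (φ := fun _ : Fin 3 => ℝ) 1).prod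
        (ContinuousLinearMap.proj (R := ℝ) (φ := fun _ : Fin 3 => ℝ) 2)) p := by
  have hx (i : Fin 3) : HasFDerivAt (fun q : Fin 3 → ℝ => q i)
      (ContinuousLinearMap.proj (R := ℝ) (φ := fun _ : Fin 3 => ℝ) i) p := hasFDerivAt_apply i p
  have hs := (((hx 0).pow 2).add ((hx 1).pow 2)).sqrt (Real.sqrt_pos.1 hp).ne'
  refine HasFDerivAt.prodMk (hs.congr_fderiv ?_) (hx 2)
  ext v
  simp [polar]
  field_simp

theorem hasFDerivAt_polarSeries_polar {c : ℕ → ℂ} {h h' : ℝ → ℝ} (hc : ∀ n, ‖c n‖ ≤ 1)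
    (hd : ∀ x : ℝ, 0 < x → HasDerivAt h (h' x) x) (hh : ExpDecay h) (hh' : ExpDecay h')
    {p : Fin 3 → ℝ} (hp : 0 < (polar p).1) :
    HasFDerivAt (fun q => polarSeries c h (polar q))
      (((ContinuousLinearMap.fst ℝ ℝ ℝ).smulRight
          (polarSeries (fun n => c n * (2 * Real.pi * ((n : ℂ) + 1))) h' (polar p))
        + (ContinuousLinearMap.snd ℝ ℝ ℝ).smulRight
          (polarSeries (fun n => c n * (Complex.I * ((n : ℂ) + 1))) h (polar p))).comp
        (((p 0 / (polar p).1) • ContinuousLinearMap.proj (R := ℝ) (φ := fun _ : Fin 3 => ℝ) 0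
          + (p 1 / (polar p).1) • ContinuousLinearMap.proj (R := ℝ) (φ := fun _ : Fin 3 => ℝ) 1).prod
          (ContinuousLinearMap.proj (R := ℝ) (φ := fun _ : Fin 3 => ℝ) 2))) p :=
  (hasFDerivAt_polarSeries hc hd hh hh' hp).comp p (hasFDerivAt_polar hp)

theorem wZb_polarSeries_polar {c : ℕ → ℂ} {h h' : ℝ → ℝ} (hc : ∀ n, ‖c n‖ ≤ 1)
    (hd : ∀ x : ℝ, 0 < x → HasDerivAt h (h' x) x) (hh : ExpDecay h) (hh' : ExpDecay h')
    {p : Fin 3 → ℝ} (hp : 0 < (polar p).1) :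
    wZb (fun q => polarSeries c h (polar q)) p = 1 / 2 * ((p 0 + Complex.I * p 1) / (polar p).1)
      * polarSeries (fun n => c n * (2 * Real.pi * ((n : ℂ) + 1))) h' (polar p) := by
  simp [wZb, pd3, (hasFDerivAt_polarSeries_polar hc hd hh hh' hp).fderiv]
  ring

theorem wZ_polarSeries_polar {c : ℕ → ℂ} {h h' : ℝ → ℝ} (hc : ∀ n, ‖c n‖ ≤ 1)
    (hd : ∀ x : ℝ, 0 < x → HasDerivAt h (h' x) x) (hh : ExpDecay h) (hh' : ExpDecay h')
    {p : Fin 3 → ℝ} (hp : 0 < (polar p).1) :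
    wZ (fun q => polarSeries c h (polar q)) p = 1 / 2 * ((p 0 - Complex.I * p 1) / (polar p).1)
      * polarSeries (fun n => c n * (2 * Real.pi * ((n : ℂ) + 1))) h' (polar p) := by
  simp [wZ, pd3, (hasFDerivAt_polarSeries_polar hc hd hh hh' hp).fderiv]
  ring

theorem pd3_two_polarSeries_polar {c : ℕ → ℂ} {h h' : ℝ → ℝ} (hc : ∀ n, ‖c n‖ ≤ 1)
    (hd : ∀ x : ℝ, 0 < x → HasDerivAt h (h' x) x) (hh : ExpDecay h) (hh' : ExpDecay h')
    {p : Fin 3 → ℝ} (hp : 0 < (polar p).1) :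
    pd3 2 (fun q => polarSeries c h (polar q)) p
      = polarSeries (fun n => c n * (Complex.I * ((n : ℂ) + 1))) h (polar p) := by
  simp [pd3, (hasFDerivAt_polarSeries_polar hc hd hh hh' hp).fderiv]

theorem pd3_congr {i : Fin 3} {f g : (Fin 3 → ℝ) → ℂ} {p : Fin 3 → ℝ} (h : f =ᶠ[nhds p] g) :
    pd3 i f p = pd3 i g p := by
  rw [pd3, pd3, h.fderiv_eq]

theorem wZ_congr {f g : (Fin 3 → ℝ) → ℂ} {p : Fin 3 → ℝ} (h : f =ᶠ[nhds p] g) :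
    wZ f p = wZ g p := by
  rw [wZ, wZ, pd3_congr h, pd3_congr h]

theorem pd3_const_mul {i : Fin 3} {f : (Fin 3 → ℝ) → ℂ} {p : Fin 3 → ℝ} (k : ℂ)
    (hf : DifferentiableAt ℝ f p) : pd3 i (fun q => k * f q) p = k * pd3 i f p := by
  simp [pd3, fderiv_const_mul hf]

theorem wZb_const_mul {f : (Fin 3 → ℝ) → ℂ} {p : Fin 3 → ℝ} (k : ℂ)
    (hf : DifferentiableAt ℝ f p) : wZb (fun q => k * f q) p = k * wZb f p := by
  simp only [wZb, pd3_const_mul k hf]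
  ring

theorem wZ_mul {f g : (Fin 3 → ℝ) → ℂ} {p : Fin 3 → ℝ} (hf : DifferentiableAt ℝ f p)
    (hg : DifferentiableAt ℝ g p) :
    wZ (fun q => f q * g q) p = wZ f p * g p + f p * wZ g p := by
  simp [wZ, pd3, fderiv_fun_mul hf hg]
  ring

theorem sub_I_mul_ne_zero {p : Fin 3 → ℝ} (hp : 0 < (polar p).1) :
    (p 0 : ℂ) - Complex.I * p 1 ≠ 0 := by
  intro h
  have h0 : p 0 = 0 := by simpa using congrArg Complex.re h
  have h1 : p 1 = 0 := by simpa using congrArg Complex.im h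
  simp [polar, h0, h1] at hp

theorem hasFDerivAt_inv_conj {p : Fin 3 → ℝ} (hp : 0 < (polar p).1) :
    HasFDerivAt (fun q : Fin 3 → ℝ => ((q 0 : ℂ) - Complex.I * q 1)⁻¹)
      (-(((p 0 : ℂ) - Complex.I * p 1) ^ 2)⁻¹ •
        (Complex.ofRealCLM.comp (ContinuousLinearMap.proj (R := ℝ) (φ := fun _ : Fin 3 => ℝ) 0)
        - Complex.I • Complex.ofRealCLM.comp
          (ContinuousLinearMap.proj (R := ℝ) (φ := fun _ : Fin 3 => ℝ) 1))) p := by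
  have hx (i : Fin 3) := Complex.ofRealCLM.hasFDerivAt.comp p (hasFDerivAt_apply (𝕜 := ℝ) i p)
  exact (hasDerivAt_inv (sub_I_mul_ne_zero hp)).comp_hasFDerivAt p
    ((hx 0).sub ((hx 1).const_mul Complex.I))

theorem wZ_inv_conj {p : Fin 3 → ℝ} (hp : 0 < (polar p).1) :
    wZ (fun q : Fin 3 → ℝ => ((q 0 : ℂ) - Complex.I * q 1)⁻¹) p = 0 := by
  simp only [wZ, pd3, (hasFDerivAt_inv_conj hp).fderiv]
  simp
  linear_combination -(((p 0 : ℂ) - Complex.I * p 1) ^ 2)⁻¹ * Complex.I_mul_I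

theorem Vfun_eq_polarSeries : Vfun = fun p => 1 / (2 * (Real.pi : ℂ) * Complex.I)
    * polarSeries (fun n => 1 / ((n : ℂ) + 1) ^ 2) K0 (polar p) := by
  ext p
  unfold Vfun polarSeries polar
  congr 1
  exact tsum_congr fun n => by ring

theorem norm_one_div_succ_sq_le (n : ℕ) : ‖1 / ((n : ℂ) + 1) ^ 2‖ ≤ 1 := by
  have h : ‖(n : ℂ) + 1‖ = (n : ℝ) + 1 := by exact_mod_cast Complex.norm_natCast (n + 1)
  rw [norm_div, norm_pow, h, norm_one]
  exact div_le_one_of_le₀ (one_le_pow₀ (by linarith [n.cast_nonneg (α := ℝ)])) (by positivity)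

theorem norm_one_div_succ_sq_mul_le (n : ℕ) :
    ‖1 / ((n : ℂ) + 1) ^ 2 * (Complex.I * ((n : ℂ) + 1))‖ ≤ 1 := by
  have h : ‖(n : ℂ) + 1‖ = (n : ℝ) + 1 := by exact_mod_cast Complex.norm_natCast (n + 1)
  have hn : (0 : ℝ) < (n : ℝ) + 1 := by positivity
  rw [norm_mul, norm_mul, norm_div, norm_pow, h, norm_one, Complex.norm_I, one_mul,
    div_mul_eq_mul_div, one_mul]
  refine div_le_one_of_le₀ ?_ (by positivity)
  nlinarith [n.cast_nonneg (α := ℝ)]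

theorem wZb_Vfun (hK0' : ∀ x : ℝ, 0 < x → HasDerivAt K0 (-K1 x) x)
    {p : Fin 3 → ℝ} (hp : 0 < (polar p).1) :
    wZb Vfun p = ((p 0 : ℂ) - Complex.I * p 1)⁻¹ * (-1 / (4 * (Real.pi : ℂ) * Complex.I)
      * polarSeries (fun n => 1 / ((n : ℂ) + 1) ^ 2) (fun x => x * K1 x) (polar p)) := by
  have hdiff := (hasFDerivAt_polarSeries_polar norm_one_div_succ_sq_le hK0' expDecay_K0.1
    expDecay_K1.1.neg hp).differentiableAt
  have hr : ((polar p).1 : ℂ) ≠ 0 := by exact_mod_cast hp.ne'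
  have hz := sub_I_mul_ne_zero hp
  have hzz : ((p 0 : ℂ) + Complex.I * p 1) * ((p 0 : ℂ) - Complex.I * p 1)
      = ((polar p).1 : ℂ) ^ 2 := by
    have : ((polar p).1 : ℂ) ^ 2 = (p 0 : ℂ) ^ 2 + (p 1 : ℂ) ^ 2 := by
      exact_mod_cast polar_fst_sq p
    linear_combination -this - (p 1 : ℂ) ^ 2 * Complex.I_mul_I
  rw [Vfun_eq_polarSeries, wZb_const_mul _ hdiff, wZb_polarSeries_polar norm_one_div_succ_sq_le hK0'
    expDecay_K0.1 expDecay_K1.1.neg hp,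
    polarSeries_eq_mul (d := fun n => 1 / ((n : ℂ) + 1) ^ 2) (h := fun x => x * K1 x)
      (k := -1 / ((polar p).1 : ℂ)) fun n => by push_cast; field_simp]
  have hπ : (Real.pi : ℂ) ≠ 0 := by exact_mod_cast Real.pi_ne_zero
  have hI := Complex.I_ne_zero
  generalize polarSeries _ _ _ = S
  rw [eq_div_of_mul_eq hz hzz]
  field_simp
  ring

theorem pd3_two_pd3_two_Vfun (hK0' : ∀ x : ℝ, 0 < x → HasDerivAt K0 (-K1 x) x)
    {p : Fin 3 → ℝ} (hp : 0 < (polar p).1) :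
    pd3 2 (fun q => pd3 2 Vfun q) p = -(1 / (2 * (Real.pi : ℂ) * Complex.I)
      * polarSeries (fun _ => 1) K0 (polar p)) := by
  have hnear : ∀ᶠ q in nhds p, 0 < (polar q).1 :=
    (continuous_fst.comp continuous_polar).continuousAt.eventually (lt_mem_nhds hp)
  have hfirst : (fun q => pd3 2 Vfun q) =ᶠ[nhds p] fun q => 1 / (2 * (Real.pi : ℂ) * Complex.I)
      * polarSeries (fun n => 1 / ((n : ℂ) + 1) ^ 2 * (Complex.I * ((n : ℂ) + 1))) K0 (polar q) := by
    filter_upwards [hnear] with q hq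
    rw [Vfun_eq_polarSeries, pd3_const_mul _ (hasFDerivAt_polarSeries_polar norm_one_div_succ_sq_le
      hK0' expDecay_K0.1 expDecay_K1.1.neg hq).differentiableAt, pd3_two_polarSeries_polar
      norm_one_div_succ_sq_le hK0' expDecay_K0.1 expDecay_K1.1.neg hq]
  rw [pd3_congr hfirst, pd3_const_mul _ (hasFDerivAt_polarSeries_polar norm_one_div_succ_sq_mul_le
      hK0' expDecay_K0.1 expDecay_K1.1.neg hp).differentiableAt, pd3_two_polarSeries_polar
      norm_one_div_succ_sq_mul_le hK0' expDecay_K0.1 expDecay_K1.1.neg hp,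
    polarSeries_eq_mul (d := fun _ => 1) (h := K0) (k := -1) fun n => by
      have : (n : ℂ) + 1 ≠ 0 := n.cast_add_one_ne_zero
      field_simp
      simp]
  ring

theorem wZ_wZb_Vfun (hK0' : ∀ x : ℝ, 0 < x → HasDerivAt K0 (-K1 x) x)
    (hK1' : ∀ x : ℝ, 0 < x → HasDerivAt (fun y => y * K1 y) (-(x * K0 x)) x)
    {p : Fin 3 → ℝ} (hp : 0 < (polar p).1) :
    wZ (fun q => wZb Vfun q) p = (Real.pi : ℂ) ^ 2 * (1 / (2 * (Real.pi : ℂ) * Complex.I)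
      * polarSeries (fun _ => 1) K0 (polar p)) := by
  have hnear : ∀ᶠ q in nhds p, 0 < (polar q).1 :=
    (continuous_fst.comp continuous_polar).continuousAt.eventually (lt_mem_nhds hp)
  have hS := (hasFDerivAt_polarSeries_polar norm_one_div_succ_sq_le hK1' expDecay_K1.2
    expDecay_K0.2.neg hp).differentiableAt
  have hconst : wZ (fun _ => -1 / (4 * (Real.pi : ℂ) * Complex.I)) p = 0 := by simp [wZ, pd3]
  rw [wZ_congr (hnear.mono fun q hq => wZb_Vfun hK0' hq),
    wZ_mul (hasFDerivAt_inv_conj hp).differentiableAt (hS.const_mul _), wZ_inv_conj hp,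
    wZ_mul (differentiableAt_const _) hS, hconst,
    wZ_polarSeries_polar norm_one_div_succ_sq_le hK1' expDecay_K1.2 expDecay_K0.2.neg hp,
    polarSeries_eq_mul (g := fun x => -(x * K0 x)) (d := fun _ => 1) (h := K0)
      (k := -(4 * (Real.pi : ℂ) ^ 2 * (polar p).1)) fun n => by
        have : (n : ℂ) + 1 ≠ 0 := n.cast_add_one_ne_zero
        push_cast
        field_simp
        ring]
  have hr : ((polar p).1 : ℂ) ≠ 0 := by exact_mod_cast hp.ne'
  have hz := sub_I_mul_ne_zero hp
  have hπ : (Real.pi : ℂ) ≠ 0 := by exact_mod_cast Real.pi_ne_zero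
  have hI := Complex.I_ne_zero
  generalize polarSeries _ _ _ = S
  field_simp
  ring

theorem stmt_14
    (hK0' : ∀ x : ℝ, 0 < x → HasDerivAt K0 (-K1 x) x)
    (hK1' : ∀ x : ℝ, 0 < x → HasDerivAt (fun y => y * K1 y) (-(x * K0 x)) x) :
    ∀ p : Fin 3 → ℝ, ¬(p 0 = 0 ∧ p 1 = 0) →
      wZ (fun q => wZb Vfun q) p
        + (Real.pi : ℂ) ^ 2 * pd3 2 (fun q => pd3 2 Vfun q) p = 0 := by
  intro p hp
  rw [wZ_wZb_Vfun hK0' hK1' (polar_fst_pos hp), pd3_two_pd3_two_Vfun hK0' (polar_fst_pos hp)]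
  ring
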